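/- arXiv:2012.12547 — 3 statements merged into one kernel-verified Lean document; each statement's English description precedes it below -/
import Mathlib

section
/- Let A be a linear relation in a complex vector space H, let λ_1, …, λ_k ∈ ℂ ∪ {∞} be pairwise distinct, and suppose x_1, …, x_k ∈ H satisfy x_i ∈ R_{λ_i}(A) and x_i ∉ R_c(A) for i = 1, …, k. Then the vectors x_1, …, x_k are linearly independent in H. -/
/-!
The relation induced by `A` on the quotient `Q = H / R_∞(A)` is single-valued, because `R_∞(A)`
contains `mul A` and is carried into itself by `A`; so it is the graph of a partially defined
operator, which extends to an operator `T` on all of `Q` (`exists_quotient_operator`). A chain in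
`A - λ` from `x` to `0` then shows that the class of `x ∈ R_λ(A)` is a generalized eigenvector of
`T` at `λ` (`mkQ_mem_maxGenEigenspace`), and generalized eigenspaces at distinct points are
independent.

On the other hand `R_λ(A) ∩ R_∞(A) ⊆ R_c(A)` for every finite `λ` (`inf_rootInf_le_singChain`), so
the vectors with finite `λ_i` have nonzero, hence linearly independent, classes in `Q`. At most one
`λ_i` is `∞`; its vector vanishes in `Q` but is nonzero in `H`, so its coefficient in a vanishing
linear combination is zero as well.
-/

open Submodule Set

variable {H : Type*} [AddCommGroup H] [Module ℂ H]

/-- A linear relation in `H`: a linear subspace of the product `H × H`. -/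
abbrev LinRel (H : Type*) [AddCommGroup H] [Module ℂ H] : Type _ := Submodule ℂ (H × H)

namespace LinRel

/-- The relation `A - λ = {(x, y - λ x) : (x,y) ∈ A}`. -/
def shift (A : LinRel H) (lam : ℂ) : LinRel H :=
  A.map ((LinearMap.fst ℂ H H).prod (LinearMap.snd ℂ H H - lam • LinearMap.fst ℂ H H))

/-- The relation `λ A = {(x, λ y) : (x,y) ∈ A}`. -/
def smulRel (lam : ℂ) (A : LinRel H) : LinRel H :=
  A.map ((LinearMap.fst ℂ H H).prod (lam • LinearMap.snd ℂ H H))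

/-- The inverse relation `A⁻¹ = {(y,x) : (x,y) ∈ A}`. -/
def inv (A : LinRel H) : LinRel H :=
  A.map ((LinearMap.snd ℂ H H).prod (LinearMap.fst ℂ H H))

/-- The product (composition) `A B = {(x,y) : ∃ z, (x,z) ∈ B ∧ (z,y) ∈ A}`. -/
def comp (A B : LinRel H) : LinRel H where
  carrier := {p | ∃ z, (p.1, z) ∈ B ∧ (z, p.2) ∈ A}
  zero_mem' := ⟨0, B.zero_mem, A.zero_mem⟩
  add_mem' := by
    rintro p q ⟨z1, h1, h2⟩ ⟨z2, h3, h4⟩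
    exact ⟨z1 + z2, B.add_mem h1 h3, A.add_mem h2 h4⟩
  smul_mem' := by
    rintro c p ⟨z, h1, h2⟩
    exact ⟨c • z, B.smul_mem c h1, A.smul_mem c h2⟩

/-- The identity relation `I = {(x,x) : x ∈ H}`. -/
def idRel : LinRel H := LinearMap.graph (LinearMap.id : H →ₗ[ℂ] H)

/-- Powers: `A⁰ = I` and `Aᵏ = A · Aᵏ⁻¹`. -/
def pow (A : LinRel H) : ℕ → LinRel H
  | 0 => idRel
  | (k+1) => comp A (pow A k)

/-- The kernel `ker A = {x : (x,0) ∈ A}`. -/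
def ker (A : LinRel H) : Submodule ℂ H := A.comap (LinearMap.inl ℂ H H)

/-- The multivalued part `mul A = {y : (0,y) ∈ A}`. -/
def mul (A : LinRel H) : Submodule ℂ H := A.comap (LinearMap.inr ℂ H H)

lemma mem_ker {A : LinRel H} {x : H} : x ∈ ker A ↔ (x, (0:H)) ∈ A := by
  simp [ker, Submodule.mem_comap]

lemma mem_mul {A : LinRel H} {y : H} : y ∈ mul A ↔ ((0:H), y) ∈ A := by
  simp [mul, Submodule.mem_comap]

lemma ker_pow_le_succ (A : LinRel H) (i : ℕ) : ker (pow A i) ≤ ker (pow A (i+1)) := by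
  intro x hx
  rw [mem_ker] at hx ⊢
  exact ⟨0, hx, A.zero_mem⟩

lemma ker_pow_mono (A : LinRel H) : Monotone fun i => ker (pow A i) :=
  monotone_nat_of_le_succ (ker_pow_le_succ A)

lemma mul_pow_le_succ (A : LinRel H) : ∀ i, mul (pow A i) ≤ mul (pow A (i+1)) := by
  intro i
  induction i with
  | zero =>
    intro y hy
    rw [mem_mul] at hy ⊢
    have : y = 0 := by simpa [pow, idRel, LinearMap.mem_graph_iff] using hy
    subst this
    exact Submodule.zero_mem _
  | succ i ih =>
    intro y hy
    rw [mem_mul] at hy ⊢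
    obtain ⟨w, hw, hwy⟩ := hy
    exact ⟨w, mem_mul.mp (ih (mem_mul.mpr hw)), hwy⟩

lemma mul_pow_mono (A : LinRel H) : Monotone fun i => mul (pow A i) :=
  monotone_nat_of_le_succ (mul_pow_le_succ A)

/-- The root space `R_λ(A) = ⋃_{i ≥ 1} ker (A - λ)ⁱ`. -/
def rootSpace (A : LinRel H) (lam : ℂ) : Submodule ℂ H where
  carrier := ⋃ i : ℕ, (ker (pow (shift A lam) (i+1)) : Set H)
  zero_mem' := Set.mem_iUnion.2 ⟨0, Submodule.zero_mem _⟩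
  add_mem' := by
    intro a b ha hb
    obtain ⟨i, hi⟩ := Set.mem_iUnion.1 ha
    obtain ⟨j, hj⟩ := Set.mem_iUnion.1 hb
    exact Set.mem_iUnion.2 ⟨max i j, Submodule.add_mem _
      (ker_pow_mono _ (by omega : i + 1 ≤ max i j + 1) hi)
      (ker_pow_mono _ (by omega : j + 1 ≤ max i j + 1) hj)⟩
  smul_mem' := by
    intro c a ha
    obtain ⟨i, hi⟩ := Set.mem_iUnion.1 ha
    exact Set.mem_iUnion.2 ⟨i, Submodule.smul_mem _ c hi⟩

/-- The root space at infinity `R_∞(A) = ⋃_{i ≥ 1} mul Aⁱ`. -/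
def rootInf (A : LinRel H) : Submodule ℂ H where
  carrier := ⋃ i : ℕ, (mul (pow A (i+1)) : Set H)
  zero_mem' := Set.mem_iUnion.2 ⟨0, Submodule.zero_mem _⟩
  add_mem' := by
    intro a b ha hb
    obtain ⟨i, hi⟩ := Set.mem_iUnion.1 ha
    obtain ⟨j, hj⟩ := Set.mem_iUnion.1 hb
    exact Set.mem_iUnion.2 ⟨max i j, Submodule.add_mem _
      (mul_pow_mono _ (by omega : i + 1 ≤ max i j + 1) hi)
      (mul_pow_mono _ (by omega : j + 1 ≤ max i j + 1) hj)⟩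
  smul_mem' := by
    intro c a ha
    obtain ⟨i, hi⟩ := Set.mem_iUnion.1 ha
    exact Set.mem_iUnion.2 ⟨i, Submodule.smul_mem _ c hi⟩

/-- The singular chain space `R_c(A) = R_0(A) ∩ R_∞(A)`. -/
def singChain (A : LinRel H) : Submodule ℂ H := rootSpace A 0 ⊓ rootInf A

/-- The root space at a point of `ℂ ∪ {∞}` (modelled as `Option ℂ`, with `none = ∞`). -/
def rootSpaceE (A : LinRel H) : Option ℂ → Submodule ℂ H
  | none => rootInf A
  | some lam => rootSpace A lam

/-- `λ ∈ ℂ ∪ {∞}` is an eigenvalue of `A`. -/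
def isEigenvalue (A : LinRel H) : Option ℂ → Prop
  | none => mul A ≠ ⊥
  | some lam => ker (shift A lam) ≠ ⊥

end LinRel
namespace LinRel

lemma mem_shift {A : LinRel H} {lam : ℂ} {x y : H} :
    (x, y) ∈ shift A lam ↔ (x, y + lam • x) ∈ A := by
  constructor
  · rintro ⟨⟨a, b⟩, h, hab⟩
    obtain ⟨rfl, rfl⟩ : a = x ∧ b - lam • a = y := Prod.mk.inj hab
    simpa using h
  · intro h
    exact ⟨_, h, Prod.ext rfl (add_sub_cancel_right y (lam • x))⟩

lemma mem_pow_zero {A : LinRel H} {x y : H} : (x, y) ∈ pow A 0 ↔ y = x := by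
  simp [pow, idRel, LinearMap.mem_graph_iff]

/-- Powers can also be built up from the other end: `Aᵏ⁺¹ = Aᵏ · A`. -/
lemma mem_pow_succ' {A : LinRel H} {k : ℕ} {x y : H} :
    (x, y) ∈ pow A (k + 1) ↔ ∃ z, (x, z) ∈ A ∧ (z, y) ∈ pow A k := by
  induction k generalizing y with
  | zero =>
    constructor
    · rintro ⟨z, hz, h⟩
      obtain rfl := mem_pow_zero.1 hz
      exact ⟨y, h, mem_pow_zero.2 rfl⟩
    · rintro ⟨z, h, hz⟩
      obtain rfl := mem_pow_zero.1 hz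
      exact ⟨x, mem_pow_zero.2 rfl, h⟩
  | succ k ih =>
    constructor
    · rintro ⟨w, hw, h⟩
      obtain ⟨z, hz, hzw⟩ := ih.1 hw
      exact ⟨z, hz, w, hzw, h⟩
    · rintro ⟨z, hz, w, hzw, h⟩
      exact ⟨w, ih.2 ⟨z, hz, hzw⟩, h⟩

lemma mem_rootSpace {A : LinRel H} {lam : ℂ} {x : H} :
    x ∈ rootSpace A lam ↔ ∃ i, (x, (0 : H)) ∈ pow (shift A lam) (i + 1) := by
  change x ∈ (⋃ i : ℕ, (ker (pow (shift A lam) (i + 1)) : Set H)) ↔ _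
  simp [mem_ker]

lemma mem_rootInf {A : LinRel H} {x : H} :
    x ∈ rootInf A ↔ ∃ i, ((0 : H), x) ∈ pow A (i + 1) := by
  change x ∈ (⋃ i : ℕ, (mul (pow A (i + 1)) : Set H)) ↔ _
  simp [mem_mul]

lemma rootInf_of_mem {A : LinRel H} {a b : H} (h : (a, b) ∈ A) (ha : a ∈ rootInf A) :
    b ∈ rootInf A := by
  obtain ⟨i, hi⟩ := mem_rootInf.1 ha
  exact mem_rootInf.2 ⟨i + 1, a, hi, h⟩

lemma rootSpace_zero_of_mem {A : LinRel H} {a b : H} (h : (a, b) ∈ A)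
    (hb : b ∈ rootSpace A 0) : a ∈ rootSpace A 0 := by
  obtain ⟨i, hi⟩ := mem_rootSpace.1 hb
  exact mem_rootSpace.2 ⟨i + 1, mem_pow_succ'.2 ⟨b, mem_shift.2 (by simpa using h), hi⟩⟩

/-- A vector of `mul Aᵐ` which `A - λ` relates to an element of `R_0(A)` lies in `R_0(A)`. If
`w` precedes `v` in the chain from `0` to `v`, then `A` relates `v - λ w` to `s`, so
`v - λ w ∈ R_0(A)`, and `A - λ` relates `w` to `v - λ w`: the same situation with a shorter
chain. -/
lemma mem_rootSpace_zero_of_mul_pow {A : LinRel H} {lam : ℂ} {m : ℕ} {v s : H}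
    (hv : ((0 : H), v) ∈ pow A m) (hs : s ∈ rootSpace A 0) (h : (v, s + lam • v) ∈ A) :
    v ∈ rootSpace A 0 := by
  induction m generalizing v s with
  | zero =>
    obtain rfl := mem_pow_zero.1 hv
    exact zero_mem _
  | succ m ih =>
    obtain ⟨w, hw, hwv⟩ := hv
    have hu : (v - lam • w, s) ∈ A := by
      simpa using A.sub_mem h (A.smul_mem lam hwv)
    have hu0 : v - lam • w ∈ rootSpace A 0 := rootSpace_zero_of_mem hu hs
    have hw0 : w ∈ rootSpace A 0 := ih hw hu0 (by simpa using hwv)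
    simpa using add_mem hu0 (Submodule.smul_mem _ lam hw0)

lemma inf_rootInf_le_singChain (A : LinRel H) (lam : ℂ) :
    rootSpace A lam ⊓ rootInf A ≤ singChain A := by
  rintro x ⟨hx, hinf⟩
  refine ⟨?_, hinf⟩
  obtain ⟨n, hn⟩ := mem_rootSpace.1 hx
  clear hx
  generalize n + 1 = n at hn
  induction n generalizing x with
  | zero =>
    rw [← mem_pow_zero.1 hn]
    exact zero_mem _
  | succ n ih =>
    obtain ⟨z, hxz, hz⟩ := mem_pow_succ'.1 hn
    rw [mem_shift] at hxz
    have hzinf : z ∈ rootInf A := by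
      simpa using sub_mem (rootInf_of_mem hxz hinf) (Submodule.smul_mem _ lam hinf)
    obtain ⟨m, hm⟩ := mem_rootInf.1 hinf
    exact mem_rootSpace_zero_of_mul_pow hm (ih hzinf hz) hxz

/-- Modulo `R_∞(A)`, the relation `A` is contained in the graph of an everywhere defined
operator. -/
lemma exists_quotient_operator (A : LinRel H) :
    ∃ T : Module.End ℂ (H ⧸ rootInf A), ∀ a b : H, (a, b) ∈ A →
      T ((rootInf A).mkQ a) = (rootInf A).mkQ b := by
  set q := (rootInf A).mkQ
  have hsv : ∀ p ∈ A.map (q.prodMap q), p.1 = 0 → p.2 = 0 := by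
    rintro _ ⟨⟨a, b⟩, hab, rfl⟩ h
    exact (Submodule.Quotient.mk_eq_zero _).2
      (rootInf_of_mem hab ((Submodule.Quotient.mk_eq_zero _).1 h))
  obtain ⟨T, hT⟩ := (A.map (q.prodMap q)).toLinearPMap.toFun.exists_extend
  refine ⟨T, fun a b hab => ?_⟩
  have hmem : (q a, q b) ∈ (A.map (q.prodMap q)).toLinearPMap.graph := by
    rw [Submodule.toLinearPMap_graph_eq _ hsv]
    exact ⟨(a, b), hab, rfl⟩
  obtain ⟨y, hy1, hy2⟩ := (LinearPMap.mem_graph_iff _).1 hmem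
  rw [← show (y : H ⧸ rootInf A) = q a from hy1, ← show _ = q b from hy2]
  exact LinearMap.congr_fun hT y

lemma mkQ_mem_maxGenEigenspace {A : LinRel H} {T : Module.End ℂ (H ⧸ rootInf A)}
    (hT : ∀ a b : H, (a, b) ∈ A → T ((rootInf A).mkQ a) = (rootInf A).mkQ b)
    {lam : ℂ} {x : H} (hx : x ∈ rootSpace A lam) :
    (rootInf A).mkQ x ∈ T.maxGenEigenspace lam := by
  obtain ⟨n, hn⟩ := mem_rootSpace.1 hx
  rw [Module.End.mem_maxGenEigenspace]
  refine ⟨n + 1, ?_⟩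
  clear hx
  generalize n + 1 = n at hn ⊢
  induction n generalizing x with
  | zero => simp [← mem_pow_zero.1 hn]
  | succ n ih =>
    obtain ⟨z, hxz, hz⟩ := mem_pow_succ'.1 hn
    have h1 : (T - lam • (1 : Module.End ℂ (H ⧸ rootInf A))) ((rootInf A).mkQ x) = (rootInf A).mkQ z := by
      rw [LinearMap.sub_apply, hT _ _ (mem_shift.1 hxz), map_add, map_smul]
      simp
    rw [pow_succ, Module.End.mul_apply, h1]
    exact ih hz

end LinRel

/-- vectors `x_i ∈ R_{λ_i}(A) \ R_c(A)` for pairwise distinct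
`λ_1, …, λ_k ∈ ℂ ∪ {∞}` (modelled as `Option ℂ`) are linearly independent. -/
theorem statement_15 (A : LinRel H) (k : ℕ) (lam : Fin k → Option ℂ)
    (hdist : Function.Injective lam) (x : Fin k → H)
    (hx : ∀ i, x i ∈ LinRel.rootSpaceE A (lam i))
    (hxc : ∀ i, x i ∉ LinRel.singChain A) :
    LinearIndependent ℂ x := by
  classical
  obtain ⟨T, hT⟩ := LinRel.exists_quotient_operator A
  set q := (LinRel.rootInf A).mkQ
  -- `getD 0` is only ever applied to indices with `lam i ≠ none`.
  have hsome : ∀ i, lam i ≠ none → lam i = some ((lam i).getD 0) := by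
    intro i hi
    obtain ⟨c, hc⟩ := Option.ne_none_iff_exists'.1 hi
    simp [hc]
  have hroot : ∀ i, lam i ≠ none → x i ∈ LinRel.rootSpace A ((lam i).getD 0) := by
    intro i hi
    have h := hx i
    rw [hsome i hi] at h
    exact h
  have hinj : Function.Injective
      (fun i : {i // lam i ≠ none} => (lam i.1).getD 0) := by
    intro i j hij
    apply Subtype.ext
    apply hdist
    rw [hsome i.1 i.2, hsome j.1 j.2]
    exact congrArg some hij
  have hli : LinearIndependent ℂ (fun i : {i // lam i ≠ none} => q (x i.1)) := by
    refine (T.independent_maxGenEigenspace.comp hinj).linearIndependent _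
      (fun i => LinRel.mkQ_mem_maxGenEigenspace hT (hroot i.1 i.2)) fun i h0 => ?_
    exact hxc i.1 (LinRel.inf_rootInf_le_singChain A _
      ⟨hroot i.1 i.2, (Submodule.Quotient.mk_eq_zero _).1 h0⟩)
  rw [Fintype.linearIndependent_iff] at hli ⊢
  intro g hg
  have hinf : ∀ i, lam i = none → q (x i) = 0 := by
    intro i hi
    have h := hx i
    rw [hi] at h
    exact (Submodule.Quotient.mk_eq_zero _).2 h
  have hfin : ∀ i, lam i ≠ none → g i = 0 := by
    intro i hi
    refine hli (fun i => g i.1) ?_ ⟨i, hi⟩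
    have hsum : ∑ i, g i • q (x i) = 0 := by
      simpa using congrArg q hg
    rw [← hsum]
    rw [← Finset.sum_filter_of_ne (p := fun i => lam i ≠ none)
      fun i _ h hi => h (by rw [hinf i hi, smul_zero])]
    exact (Finset.sum_subtype _ (by simp) (fun i => g i • q (x i))).symm
  intro i
  by_cases hi : lam i = none
  · rw [Finset.sum_eq_single i] at hg
    · refine (smul_eq_zero.1 hg).resolve_right fun h0 => hxc i ?_
      rw [h0]
      exact zero_mem _
    · intro j _ hji
      rw [hfin j fun hj => hji (hdist (hj.trans hi.symm)), zero_smul]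
    · simp
  · exact hfin i hi
end

section
/- Let A be a linear relation in a finite-dimensional complex vector space H. Then R_c(A) ≠ {0} if and only if σ_p(A) = ℂ ∪ {∞}, i.e., if and only if ker(A − λ) ≠ {0} for every λ ∈ ℂ and mul A ≠ {0}. -/
/-!
Both conditions are equivalent to the existence of a *singular chain*: vectors
`0 = v 0, v 1, …, v (n + 1) = 0`, not all zero, with consecutive pairs `(v i, v (i + 1))` in `A`.
The nonzero entries of such chains are exactly the nonzero elements of `R_c(A)`.

Given a singular chain and `μ`, the Horner sums `s (i + 1) = μ • s i + v (i + 1)`, `s 0 = 0`, also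
satisfy `(s i, s (i + 1)) ∈ A`, and `s (n + 1) = μ • s n`. So either `s n` is an eigenvector for
`μ`, or `s n = 0` and `s` is a strictly shorter singular chain; induction on the length gives an
eigenvector (`exists_eigenvector_of_chain`). In polynomial terms, a root of
`∑ v i * X ^ (n - i)` is divided out. The first nonzero entry of the chain lies in `mul A`.

Conversely, take `N = 2 * dim H + 1` distinct eigenvalues `λ j` with eigenvectors `x j` and put
`v i = ∑ j, c j • λ j ^ i • x j`. The conditions `v 0 = 0` and `v N = 0` are at most `2 * dim H`
linear equations in `c`, so some `c ≠ 0` satisfies them, and the Vandermonde determinant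
prevents `v 0, …, v (N - 1)` from all vanishing. Thus `v` is a singular chain
(`exists_chain_of_eigenvectors`).
-/

open Submodule Set

variable {H : Type*} [AddCommGroup H] [Module ℂ H]

namespace LinRel

lemma shift_zero (A : LinRel H) : shift A 0 = A := by
  ext ⟨x, y⟩
  simp [shift]

lemma mem_ker_shift {A : LinRel H} {lam : ℂ} {x : H} :
    x ∈ ker (shift A lam) ↔ (x, lam • x) ∈ A := by
  rw [mem_ker, shift, Submodule.mem_map]
  constructor
  · rintro ⟨⟨a, b⟩, hab, h⟩
    obtain ⟨rfl, h⟩ := Prod.ext_iff.1 h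
    obtain rfl : b = lam • a := sub_eq_zero.1 h
    exact hab
  · intro h
    exact ⟨_, h, by simp⟩

lemma mem_pow_of_chain {A : LinRel H} (v : ℕ → H) (a k : ℕ)
    (h : ∀ i < k, (v (a + i), v (a + i + 1)) ∈ A) : (v a, v (a + k)) ∈ pow A k := by
  induction k with
  | zero => simp [pow, idRel, LinearMap.mem_graph_iff]
  | succ k ih => exact ⟨_, ih fun i hi => h i (by omega), h k (by omega)⟩

lemma exists_chain_of_mem_pow {A : LinRel H} (k : ℕ) {x y : H} (h : (x, y) ∈ pow A k) :
    ∃ v : ℕ → H, v 0 = x ∧ v k = y ∧ ∀ i < k, (v i, v (i + 1)) ∈ A := by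
  induction k generalizing y with
  | zero =>
    have : y = x := by simpa [pow, idRel, LinearMap.mem_graph_iff] using h
    exact ⟨fun _ => x, rfl, this.symm, by simp⟩
  | succ k ih =>
    obtain ⟨z, hxz, hzy⟩ := h
    obtain ⟨v, h0, hk, hv⟩ := ih hxz
    refine ⟨fun i => if i ≤ k then v i else y, by simpa using h0, by simp, fun i hi => ?_⟩
    rcases Nat.lt_succ_iff_lt_or_eq.mp hi with hi' | rfl
    · have h1 : i ≤ k := hi'.le
      have h2 : i + 1 ≤ k := hi'
      simpa [h1, h2] using hv i hi'
    · simpa [hk] using hzy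

/-- A sequence `v` whose first `n + 2` entries form a singular chain of `A`: it leads from
`v 0 = 0` to `v (n + 1) = 0` through vectors that are not all zero. Entries beyond `n + 1` are
irrelevant. -/
def IsSingularChain (A : LinRel H) (n : ℕ) (v : ℕ → H) : Prop :=
  v 0 = 0 ∧ v (n + 1) = 0 ∧ (∀ i ≤ n, (v i, v (i + 1)) ∈ A) ∧ ∃ i ≤ n, v i ≠ 0

lemma singChain_ne_bot_iff (A : LinRel H) :
    singChain A ≠ ⊥ ↔ ∃ n v, IsSingularChain A n v := by
  rw [Submodule.ne_bot_iff]
  constructor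
  · rintro ⟨x, ⟨h0, hinf⟩, hx⟩
    obtain ⟨n, hn⟩ := Set.mem_iUnion.1 h0
    obtain ⟨m, hm⟩ := Set.mem_iUnion.1 hinf
    rw [shift_zero] at hn
    obtain ⟨w, w0, wn, hw⟩ := exists_chain_of_mem_pow _ (mem_ker.1 hn)
    obtain ⟨v, v0, vm, hv⟩ := exists_chain_of_mem_pow _ (mem_mul.1 hm)
    refine ⟨m + 1 + n, fun i => if i ≤ m + 1 then v i else w (i - (m + 1)), by simpa using v0, ?_,
      fun i hi => ?_, m + 1, by omega, by simpa [vm] using hx⟩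
    · have h1 : ¬ (m + 1 + n + 1 ≤ m + 1) := by omega
      have h2 : m + 1 + n + 1 - (m + 1) = n + 1 := by omega
      simp only [h1, h2, if_false, wn]
    · rcases lt_trichotomy i (m + 1) with hlt | rfl | hgt
      · have h1 : i ≤ m + 1 := by omega
        have h2 : i + 1 ≤ m + 1 := by omega
        simp only [h1, h2, if_true]
        exact hv i hlt
      · have h2 : ¬ (m + 1 + 1 ≤ m + 1) := by omega
        have h3 : m + 1 + 1 - (m + 1) = 0 + 1 := by omega
        simp only [le_refl, h2, h3, if_true, if_false, vm, ← w0]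
        exact hw 0 (by omega)
      · have h1 : ¬ (i ≤ m + 1) := by omega
        have h2 : ¬ (i + 1 ≤ m + 1) := by omega
        have h3 : i + 1 - (m + 1) = i - (m + 1) + 1 := by omega
        simp only [h1, h2, h3, if_false]
        exact hw _ (by omega)
  · rintro ⟨n, v, v0, vn, hv, i, hi, hvi⟩
    have hi0 : i ≠ 0 := by
      rintro rfl
      exact hvi v0
    refine ⟨v i, ⟨Set.mem_iUnion.2 ⟨n - i, ?_⟩, Set.mem_iUnion.2 ⟨i - 1, ?_⟩⟩, hvi⟩
    · rw [shift_zero, SetLike.mem_coe, mem_ker]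
      have := mem_pow_of_chain (A := A) v i (n - i + 1) fun j hj => hv _ (by omega)
      rwa [show i + (n - i + 1) = n + 1 by omega, vn] at this
    · rw [SetLike.mem_coe, mem_mul]
      have := mem_pow_of_chain (A := A) v 0 (i - 1 + 1) fun j hj => hv _ (by omega)
      rwa [show 0 + (i - 1 + 1) = i by omega, v0] at this

lemma mul_ne_bot_of_chain {A : LinRel H} {n : ℕ} {v : ℕ → H} (h : IsSingularChain A n v) :
    mul A ≠ ⊥ := by
  obtain ⟨v0, -, hv, i, hi, hvi⟩ := h
  intro hbot
  apply hvi
  clear hvi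
  induction i with
  | zero => exact v0
  | succ i ih =>
    have h1 := hv i (by omega)
    rwa [ih (by omega), ← mem_mul, hbot, Submodule.mem_bot] at h1

/-- The Horner partial sums of `v` at `μ`, skipping the entry `v 0`. -/
def horner (μ : ℂ) (v : ℕ → H) : ℕ → H
  | 0 => 0
  | i + 1 => μ • horner μ v i + v (i + 1)

lemma horner_mem {A : LinRel H} {n : ℕ} {v : ℕ → H} (μ : ℂ) (v0 : v 0 = 0)
    (hv : ∀ i ≤ n, (v i, v (i + 1)) ∈ A) :
    ∀ i ≤ n, (horner μ v i, horner μ v (i + 1)) ∈ A := by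
  intro i hi
  induction i with
  | zero => simpa [horner, v0] using hv 0 hi
  | succ i ih => exact A.add_mem (A.smul_mem μ (ih (by omega))) (hv _ hi)

lemma exists_eigenvector_of_chain {A : LinRel H} (μ : ℂ) (n : ℕ) {v : ℕ → H}
    (h : IsSingularChain A n v) : ∃ x ≠ 0, (x, μ • x) ∈ A := by
  induction n generalizing v with
  | zero =>
    obtain ⟨v0, -, -, i, hi, hvi⟩ := h
    obtain rfl : i = 0 := by omega
    exact absurd v0 hvi
  | succ n ih =>
    obtain ⟨v0, vn, hv, i, hi, hvi⟩ := h
    have hs := horner_mem μ v0 hv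
    by_cases hz : horner μ v (n + 1) = 0
    · refine ih (v := horner μ v) ⟨rfl, hz, fun j hj => hs j (by omega), ?_⟩
      by_contra! hall
      -- `v` is recovered from its Horner sums, so these cannot all vanish.
      have hall' : ∀ j ≤ n + 1, horner μ v j = 0 := fun j hj => by
        rcases Nat.le_succ_iff.mp hj with hj | rfl
        exacts [hall j hj, hz]
      cases i with
      | zero => exact hvi v0
      | succ i =>
        have h1 := hall' (i + 1) hi
        rw [horner, hall' i (by omega), smul_zero, zero_add] at h1
        exact hvi h1
    · refine ⟨_, hz, ?_⟩
      have h1 := hs (n + 1) le_rfl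
      rwa [show horner μ v (n + 1 + 1) = μ • horner μ v (n + 1) + v (n + 1 + 1) from rfl,
        vn, add_zero] at h1

lemma exists_chain_of_eigenvectors (A : LinRel H) [FiniteDimensional ℂ H]
    (h : ∀ lam : ℂ, ∃ x ≠ 0, (x, lam • x) ∈ A) : ∃ n v, IsSingularChain A n v := by
  choose x hx hxA using h
  set d := Module.finrank ℂ H with hd
  let e : Fin (2 * d + 1) → ℂ := fun j => ((j : ℕ) : ℂ)
  have he : Function.Injective e := fun a b hab => Fin.ext (Nat.cast_injective hab)
  let T : ℕ → (Fin (2 * d + 1) → ℂ) →ₗ[ℂ] H := fun i =>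
    Fintype.linearCombination ℂ fun j => e j ^ i • x (e j)
  have hT : ∀ i c, T i c = ∑ j, c j • e j ^ i • x (e j) := fun i c => rfl
  have hker : LinearMap.ker ((T 0).prod (T (2 * d + 1))) ≠ ⊥ := by
    apply LinearMap.ker_ne_bot_of_finrank_lt
    rw [Module.finrank_prod, Module.finrank_fin_fun]
    omega
  obtain ⟨c, hc, hc0⟩ := (Submodule.ne_bot_iff _).1 hker
  obtain ⟨hT0, hTN⟩ : T 0 c = 0 ∧ T (2 * d + 1) c = 0 := by
    simpa using hc
  refine ⟨2 * d, fun i => T i c, hT0, hTN, fun i _ => ?_, ?_⟩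
  · have hsum : (T i c, T (i + 1) c)
        = ∑ j, (c j * e j ^ i) • (x (e j), e j • x (e j)) := by
      rw [Prod.ext_iff, Prod.fst_sum, Prod.snd_sum]
      simp [hT, smul_smul, pow_succ, mul_assoc]
    rw [hsum]
    exact A.sum_mem fun j _ => A.smul_mem _ (hxA _)
  · by_contra! hall
    apply hc0
    funext j
    have hj : c j • x (e j) = 0 := by
      -- Linear functionals reduce the claim to the scalar Vandermonde system.
      rw [← Module.forall_dual_apply_eq_zero_iff ℂ]
      intro φ
      have hV := Matrix.eq_zero_of_forall_pow_sum_mul_pow_eq_zero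
        (v := fun j => φ (c j • x (e j))) he fun i => by
          have := congrArg φ (hall i (by omega))
          rw [hT, map_sum, map_zero] at this
          rw [← this]
          refine Finset.sum_congr rfl fun j _ => ?_
          simp only [map_smul, smul_eq_mul]
          ring
      exact congrFun hV j
    exact (smul_eq_zero.1 hj).resolve_right (hx _)

end LinRel

/-- in a finite-dimensional space, `R_c(A) ≠ {0}` iff
`σ_p(A) = ℂ ∪ {∞}`, i.e. iff `ker (A - λ) ≠ {0}` for every `λ ∈ ℂ` and
`mul A ≠ {0}`. -/
theorem statement_18 (A : LinRel H) [FiniteDimensional ℂ H] :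
    LinRel.singChain A ≠ ⊥ ↔
      ((∀ lam : ℂ, LinRel.ker (LinRel.shift A lam) ≠ ⊥) ∧ LinRel.mul A ≠ ⊥) := by
  rw [LinRel.singChain_ne_bot_iff]
  simp only [Submodule.ne_bot_iff (LinRel.ker _), LinRel.mem_ker_shift]
  constructor
  · rintro ⟨n, v, h⟩
    refine ⟨fun lam => ?_, LinRel.mul_ne_bot_of_chain h⟩
    obtain ⟨x, hx, hxA⟩ := LinRel.exists_eigenvector_of_chain lam n h
    exact ⟨x, hxA, hx⟩
  · rintro ⟨h, -⟩
    refine LinRel.exists_chain_of_eigenvectors A fun lam => ?_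
    obtain ⟨x, hxA, hx⟩ := h lam
    exact ⟨x, hx, hxA⟩
end

section
/- Let A be a linear relation in a complex vector space H (not necessarily finite-dimensional). If R_c(A) ≠ {0}, then every λ ∈ ℂ ∪ {∞} is an eigenvalue of A; that is, ker(A − λ) ≠ {0} for every λ ∈ ℂ and mul A ≠ {0}. -/
/-!
A nonzero `x ∈ R_0(A) ∩ R_∞(A)` lies on a nonzero sequence `f` with `(f i, f (i + 1)) ∈ A` for all
`i`, which starts at `0` and is eventually `0` (`LinRel.exists_chain_of_mem_pow`). Its first nonzero
term lies in `mul A`, and its last nonzero term lies in `ker A`.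

For `λ ≠ 0`, put `F(z) = ∑ zⁱ f i`. Summing the relations gives `(F(λ⁻¹), λ F(λ⁻¹)) ∈ A`, so
`F(λ⁻¹)` is an eigenvector unless it is zero. If it is zero, the coefficients of
`F(z) / (z - λ⁻¹)` form a shorter nonzero chain of the same kind, because they are combinations of
shifts of `f`; induction on the length concludes (`LinRel.chain_eq_zero`).
-/

open Submodule Set

variable {H : Type*} [AddCommGroup H] [Module ℂ H]

/-- A chain of `A`: a sequence in which consecutive terms are related by `A`. -/
def LinRel.IsChainSeq (A : LinRel H) (f : ℕ → H) : Prop :=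
  ∀ i, (f i, f (i + 1)) ∈ A

lemma LinRel.shift_zero_s19 (A : LinRel H) : LinRel.shift A 0 = A := by
  have h : (LinearMap.fst ℂ H H).prod (LinearMap.snd ℂ H H - (0 : ℂ) • LinearMap.fst ℂ H H)
      = LinearMap.id := by ext <;> simp
  rw [LinRel.shift, h, Submodule.map_id]

lemma LinRel.mem_ker_shift_s19 {A : LinRel H} {lam : ℂ} {x : H} (h : (x, lam • x) ∈ A) :
    x ∈ LinRel.ker (LinRel.shift A lam) := by
  rw [LinRel.mem_ker]
  exact Submodule.mem_map.2 ⟨_, h, by simp⟩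

/-- A chain can be extended to the left by any `x` with `(x, h 0) ∈ Aᵏ`. -/
lemma LinRel.exists_chain_of_mem_pow_s19 (A : LinRel H) (k : ℕ) {x : H} {h : ℕ → H}
    (hh : A.IsChainSeq h) (hx : (x, h 0) ∈ LinRel.pow A k) :
    ∃ f, A.IsChainSeq f ∧ f 0 = x ∧ ∀ i, f (i + k) = h i := by
  induction k generalizing h with
  | zero =>
    refine ⟨h, hh, ?_, fun i => rfl⟩
    simpa [LinRel.pow, LinRel.idRel, LinearMap.mem_graph_iff] using hx
  | succ k ih =>
    obtain ⟨z, hz, hzy⟩ := hx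
    obtain ⟨f, hf, hf0, hfk⟩ := ih (h := fun i => Nat.casesOn i z h)
      (fun i => by cases i with
        | zero => exact hzy
        | succ i => exact hh i) hz
    exact ⟨f, hf, hf0, fun i => by
      rw [show i + (k + 1) = i + 1 + k by omega]; exact hfk (i + 1)⟩

lemma LinRel.chain_sum {A : LinRel H} {f : ℕ → H} (hf : A.IsChainSeq f) (mu : ℂ) (n i : ℕ) :
    (∑ k ∈ Finset.range n, mu ^ k • f (i + k),
      ∑ k ∈ Finset.range n, mu ^ k • f (i + 1 + k)) ∈ A := by
  rw [show (∑ k ∈ Finset.range n, mu ^ k • f (i + k), ∑ k ∈ Finset.range n, mu ^ k • f (i + 1 + k))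
      = ∑ k ∈ Finset.range n, (mu ^ k • f (i + k), mu ^ k • f (i + 1 + k)) by
    ext <;> simp [Prod.fst_sum, Prod.snd_sum]]
  refine Submodule.sum_mem _ fun k _ => ?_
  have := A.smul_mem (mu ^ k) (hf (i + k))
  rwa [Prod.smul_mk, show i + k + 1 = i + 1 + k by omega] at this

/-- If `λ` is not an eigenvalue, every chain that starts and ends in zeros vanishes. The induction
is on the position `N` of the last term that may be nonzero. -/
lemma LinRel.chain_eq_zero {A : LinRel H} {lam : ℂ}
    (hk : LinRel.ker (LinRel.shift A lam) = ⊥) (N : ℕ) {f : ℕ → H} (hf : A.IsChainSeq f)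
    (h0 : f 0 = 0) (hN : ∀ i, N < i → f i = 0) (i : ℕ) : f i = 0 := by
  have key : ∀ x : H, (x, lam • x) ∈ A → x = 0 := fun x hx => by
    have := LinRel.mem_ker_shift_s19 hx
    rwa [hk, Submodule.mem_bot] at this
  induction N generalizing f i with
  | zero =>
    rcases Nat.eq_zero_or_pos i with rfl | hi
    exacts [h0, hN i hi]
  | succ N ih =>
    rcases eq_or_ne lam 0 with rfl | hl
    · -- The last possibly nonzero term lies in `ker A`.
      refine ih hf h0 (fun j hj => ?_) i
      rcases Nat.lt_or_ge (N + 1) j with h | h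
      · exact hN j h
      · have := hf j
        rw [hN (j + 1) (by omega)] at this
        exact key _ (by simpa using this)
    · -- With `F(z) = ∑ zⁱ f i`, these are the coefficients of `(F(z) - F(λ⁻¹)) / (z - λ⁻¹)`.
      set g : ℕ → H := fun i => ∑ k ∈ Finset.range (N + 1), lam⁻¹ ^ k • f (i + 1 + k) with hg
      have hgc : A.IsChainSeq g := fun i => LinRel.chain_sum hf _ _ (i + 1)
      have hrec : ∀ i, f (i + 1) + lam⁻¹ • g (i + 1) = g i := fun i => by
        have e : g i = ∑ k ∈ Finset.range (N + 2), lam⁻¹ ^ k • f (i + 1 + k) := by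
          rw [Finset.sum_range_succ, hN (i + 1 + (N + 1)) (by omega)]
          simp [hg]
        rw [e, Finset.sum_range_succ', hg, Finset.smul_sum, add_comm]
        congr 1
        · refine Finset.sum_congr rfl fun k _ => ?_
          rw [smul_smul, pow_succ', show i + 1 + 1 + k = i + 1 + (k + 1) by omega]
        · simp
      have hg0 : g 0 = 0 := by
        -- `F(λ⁻¹) = λ⁻¹ g 0` because `f 0 = 0`, and it is an eigenvector unless it vanishes.
        have hmem := LinRel.chain_sum hf lam⁻¹ (N + 2) 0
        have e1 : ∑ k ∈ Finset.range (N + 2), lam⁻¹ ^ k • f (0 + k) = lam⁻¹ • g 0 := by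
          rw [Finset.sum_range_succ', hg, Finset.smul_sum]
          simp only [h0, smul_zero, add_zero]
          refine Finset.sum_congr rfl fun k _ => ?_
          rw [smul_smul, pow_succ', show 0 + 1 + k = 0 + (k + 1) by omega]
        have e2 : ∑ k ∈ Finset.range (N + 2), lam⁻¹ ^ k • f (0 + 1 + k) = g 0 := by
          rw [Finset.sum_range_succ, hN (0 + 1 + (N + 1)) (by omega)]
          simp [hg]
        rw [e1, e2] at hmem
        have := key (lam⁻¹ • g 0) (by rwa [smul_inv_smul₀ hl])
        exact (smul_eq_zero.1 this).resolve_left (inv_ne_zero hl)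
      have hgN : ∀ i, N < i → g i = 0 := fun i hi =>
        Finset.sum_eq_zero fun k _ => by rw [hN _ (by omega), smul_zero]
      have hz := ih hgc hg0 hgN
      cases i with
      | zero => exact h0
      | succ i => simpa [hz] using hrec i

/-- if `R_c(A) ≠ {0}` then every `λ ∈ ℂ ∪ {∞}` is an eigenvalue
of `A`: `ker (A - λ) ≠ {0}` for every `λ ∈ ℂ` and `mul A ≠ {0}`. -/
theorem statement_19 (A : LinRel H) (hc : LinRel.singChain A ≠ ⊥) :
    (∀ lam : ℂ, LinRel.ker (LinRel.shift A lam) ≠ ⊥) ∧ LinRel.mul A ≠ ⊥ := by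
  obtain ⟨x, ⟨hx0, hxinf⟩, hxne⟩ := Submodule.exists_mem_ne_zero_of_ne_bot hc
  obtain ⟨n, hn⟩ := Set.mem_iUnion.1 hx0
  obtain ⟨m, hm⟩ := Set.mem_iUnion.1 hxinf
  rw [LinRel.shift_zero_s19, SetLike.mem_coe, LinRel.mem_ker] at hn
  rw [SetLike.mem_coe, LinRel.mem_mul] at hm
  obtain ⟨g, hg, hgx, hgn⟩ := A.exists_chain_of_mem_pow_s19 (n + 1) (h := fun _ => 0)
    (fun _ => A.zero_mem) hn
  obtain ⟨f, hf, hf0, hfm⟩ := A.exists_chain_of_mem_pow_s19 (m + 1) (x := 0) hg (by rwa [hgx])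
  have hfx : f (m + 1) = x := by rw [← hgx, ← hfm 0, Nat.zero_add]
  refine ⟨fun lam hk => hxne ?_, fun hmul => hxne ?_⟩
  · rw [← hfx]
    refine LinRel.chain_eq_zero hk (n + m + 2) hf hf0 (fun i hi => ?_) _
    obtain ⟨j, rfl⟩ : ∃ j, i = j + (n + 1) + (m + 1) := ⟨i - (n + 1) - (m + 1), by omega⟩
    rw [hfm, hgn]
  · have hall : ∀ i, f i = 0 := fun i => by
      induction i with
      | zero => exact hf0
      | succ i ih =>
        have := hf i
        rwa [ih, ← LinRel.mem_mul, hmul, Submodule.mem_bot] at this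
    rw [← hfx, hall]
end
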